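/- arXiv:2510.08291 — 3 statements merged into one kernel-verified Lean document; each statement's English description precedes it below -/
import Mathlib

section
/- Discrete stochastic Gronwall inequality: Let (Ω, F, {F_n}_{n∈ℕ}, P) be a filtered probability space and let {M_n}_{n∈ℕ} be an {F_n}-martingale with M_0 = 0. Let {X_n}, {F_n}, {G_n} be sequences of nonnegative adapted real random variables with E[X_0] < ∞, and suppose that for all n ∈ ℕ: X_n ≤ F_n + M_n + Σ_{k=0}^{n-1} G_k X_k. Then for any q ∈ (0,1) and any pair of conjugate exponents α, α' ∈ [1,∞] (i.e., 1/α + 1/α' = 1) with qα < 1, and for every n ∈ ℕ, one has E[sup_{0≤k≤n} X_k^q] ≤ (1 + 1/(1-αq))^{1/α} · ‖Π_{k=0}^{n-1} (1+G_k)^q‖_{L^{α'}(Ω)} · (E[sup_{0≤k≤n} F_k])^q. -/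
/-!
Write `P k = ∏_{j<k} (1 + G j)` and `Φ = sup_{k≤n} F k`. Dividing the recursion by `P` absorbs the
sum `∑ G_k X_k` (`pathwise_gronwall`), and leaves
`0 ≤ X k / P k ≤ Φ + N k` for `k ≤ n`, where `N k = ∑_{j<k} (M (j+1) - M j) / P (j+1)`. As `P (j+1)` is
`ℱ j`-measurable and at least `1`, `N` is a martingale with mean zero.

If `E Φ = ∞` the right-hand side is infinite. Otherwise, conditioning on `ℱ k` gives
`X k / P k ≤ W k` with `W k = E[Φ | ℱ k] + N k`, a martingale with `E (W n) = E Φ`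
(`exists_dominating_martingale`). Doob's maximal inequality for the positive part of `W` gives
`t * P(sup W⁺ ≥ t) ≤ E Φ`, and the layer cake formula turns this weak-type bound into
`E[(sup W⁺)^p] ≤ (E Φ)^p / (1 - p)` for `p ∈ (0, 1)` (`lintegral_rpow_le_of_weak`).
Finally `X k ^ q ≤ (P n)^q * (sup W⁺)^q`, and Hölder's inequality with exponents `α', α` together
with the moment bound for `p = α q` gives the claim, with `1 / (1 - α q)` in place of the larger
constant `1 + 1 / (1 - α q)`.
-/

open MeasureTheory
open scoped NNReal ENNReal

/-- A nonnegative function satisfying the weak-`L¹` bound `t * μ {t ≤ f} ≤ a` on a probability space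
has `p`-th moment at most `a ^ p / (1 - p)`, for `0 < p < 1`. -/
lemma lintegral_rpow_le_of_weak {Ω : Type*} {m0 : MeasurableSpace Ω} {μ : Measure Ω}
    [IsProbabilityMeasure μ] {f : Ω → ℝ} (hf : Measurable f) (hf0 : ∀ ω, 0 ≤ f ω)
    {a : ℝ} (ha : 0 ≤ a)
    (hw : ∀ t : ℝ, 0 < t → ENNReal.ofReal t * μ {ω | t ≤ f ω} ≤ ENNReal.ofReal a)
    {p : ℝ} (hp0 : 0 < p) (hp1 : p < 1) :
    ∫⁻ ω, ENNReal.ofReal (f ω ^ p) ∂μ ≤ ENNReal.ofReal (a ^ p / (1 - p)) := by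
  rw [lintegral_rpow_eq_lintegral_meas_le_mul μ (Filter.Eventually.of_forall hf0)
    hf.aemeasurable hp0]
  have hw' : ∀ t : ℝ, 0 < t → μ {ω | t ≤ f ω} ≤ ENNReal.ofReal (a / t) := by
    intro t ht
    rw [ENNReal.ofReal_div_of_pos ht, ENNReal.le_div_iff_mul_le (by simp [ht]) (by simp), mul_comm]
    exact hw t ht
  rcases ha.eq_or_lt with rfl | ha
  · have h0 : ∫⁻ t in Set.Ioi (0 : ℝ), μ {ω | t ≤ f ω} * ENNReal.ofReal (t ^ (p - 1)) = 0 := by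
      rw [← nonpos_iff_eq_zero, ← lintegral_zero (μ := volume.restrict (Set.Ioi (0 : ℝ)))]
      refine setLIntegral_mono' measurableSet_Ioi fun t ht => ?_
      have := hw' t ht
      simp only [zero_div, ENNReal.ofReal_zero, nonpos_iff_eq_zero] at this
      simp [this]
    simp [h0]
  have h1 : ∫⁻ t in Set.Ioc 0 a, μ {ω | t ≤ f ω} * ENNReal.ofReal (t ^ (p - 1))
      ≤ ENNReal.ofReal (a ^ p / p) := by
    calc _ ≤ ∫⁻ t in Set.Ioc 0 a, ENNReal.ofReal (t ^ (p - 1)) := by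
          refine setLIntegral_mono' measurableSet_Ioc fun t ht => ?_
          calc _ ≤ 1 * ENNReal.ofReal (t ^ (p - 1)) := by gcongr; exact prob_le_one
            _ = _ := one_mul _
      _ = _ := by
          have hint : IntegrableOn (fun t : ℝ => t ^ (p - 1)) (Set.Ioc 0 a) := by
            rw [← intervalIntegrable_iff_integrableOn_Ioc_of_le ha.le]
            exact intervalIntegral.intervalIntegrable_rpow' (by linarith)
          rw [← ofReal_integral_eq_lintegral_ofReal hint,
            ← intervalIntegral.integral_of_le ha.le, integral_rpow (Or.inl (by linarith))]
          · simp [Real.zero_rpow hp0.ne']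
          · exact ae_restrict_of_forall_mem measurableSet_Ioc
              fun t ht => Real.rpow_nonneg ht.1.le _
  have h2 : ∫⁻ t in Set.Ioi a, μ {ω | t ≤ f ω} * ENNReal.ofReal (t ^ (p - 1))
      ≤ ENNReal.ofReal (a ^ p / (1 - p)) := by
    calc _ ≤ ∫⁻ t in Set.Ioi a, ENNReal.ofReal (a * t ^ (p - 2)) := by
          refine setLIntegral_mono' measurableSet_Ioi fun t ht => ?_
          have ht0 : 0 < t := ha.trans ht
          calc _ ≤ ENNReal.ofReal (a / t) * ENNReal.ofReal (t ^ (p - 1)) := by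
                gcongr; exact hw' t ht0
            _ = _ := by
                rw [← ENNReal.ofReal_mul (by positivity)]
                congr 1
                rw [show p - 1 = (p - 2) + 1 by ring, Real.rpow_add_one ht0.ne']
                field_simp
      _ = _ := by
          have hint : IntegrableOn (fun t : ℝ => a * t ^ (p - 2)) (Set.Ioi a) :=
            (integrableOn_Ioi_rpow_of_lt (by linarith) ha).const_mul a
          rw [← ofReal_integral_eq_lintegral_ofReal hint, integral_const_mul,
            integral_Ioi_rpow_of_lt (by linarith) ha]
          · congr 1
            have h3 : p - 2 + 1 = -(1 - p) := by ring
            have h4 : a ^ p = a * a ^ (p - 2 + 1) := by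
              rw [mul_comm, ← Real.rpow_add_one ha.ne']; congr 1; ring
            rw [h4, h3]
            have : 1 - p ≠ 0 := by linarith
            field_simp
          · exact ae_restrict_of_forall_mem measurableSet_Ioi
              fun t ht => mul_nonneg ha.le (Real.rpow_nonneg (ha.trans ht).le _)
  rw [← Set.Ioc_union_Ioi_eq_Ioi ha.le]
  calc _ ≤ ENNReal.ofReal p * (ENNReal.ofReal (a ^ p / p) + ENNReal.ofReal (a ^ p / (1 - p))) := by
        gcongr
        exact (lintegral_union_le _ _ _).trans (add_le_add h1 h2)
    _ = _ := by
        have hap : 0 ≤ a ^ p := Real.rpow_nonneg ha.le _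
        have h1p : 0 < 1 - p := by linarith
        rw [← ENNReal.ofReal_add (by positivity) (by positivity), ← ENNReal.ofReal_mul hp0.le]
        congr 1
        field_simp
        ring

/-- Deterministic discrete Gronwall step: dividing by the product `∏_{j<k} (1 + g j)` absorbs the
sum `∑ g j * x j`, and turns the driving sequence `m` into a discounted one. -/
lemma pathwise_gronwall {x g m : ℕ → ℝ} {Φ : ℝ} {n : ℕ} (hg : ∀ k, 0 ≤ g k) (hm : m 0 = 0)
    (h : ∀ k ≤ n, x k ≤ Φ + m k + ∑ j ∈ Finset.range k, g j * x j) :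
    ∀ k ≤ n, x k / ∏ j ∈ Finset.range k, (1 + g j) ≤
      Φ + ∑ j ∈ Finset.range k,
        (∏ i ∈ Finset.range (j + 1), (1 + g i))⁻¹ * (m (j + 1) - m j) := by
  have hP : ∀ k, 0 < ∏ j ∈ Finset.range k, (1 + g j) :=
    fun k => Finset.prod_pos fun j _ => by linarith [hg j]
  -- The majorant `y k = Φ + m k + ∑_{j<k} g j * x j` satisfies
  -- `y (k + 1) ≤ (1 + g k) * y k + (m (k + 1) - m k)`, because `x k ≤ y k`.
  have key : ∀ k ≤ n, (Φ + m k + ∑ j ∈ Finset.range k, g j * x j)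
      / ∏ j ∈ Finset.range k, (1 + g j) ≤
      Φ + ∑ j ∈ Finset.range k,
        (∏ i ∈ Finset.range (j + 1), (1 + g i))⁻¹ * (m (j + 1) - m j) := by
    intro k
    induction k with
    | zero => intro _; simp [hm]
    | succ k ih =>
      intro hk
      have ih := ih (by omega)
      have hx := h k (by omega)
      rw [Finset.sum_range_succ
        (fun j => (∏ i ∈ Finset.range (j + 1), (1 + g i))⁻¹ * (m (j + 1) - m j)), ← add_assoc]
      refine le_trans ?_ (add_le_add_left ih _)
      have hPk := hP k
      have h1g : 0 < 1 + g k := by linarith [hg k]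
      rw [Finset.sum_range_succ, Finset.prod_range_succ]
      generalize (∑ j ∈ Finset.range k, g j * x j) = s at *
      generalize (∏ j ∈ Finset.range k, (1 + g j)) = P at *
      rw [div_le_iff₀ (by positivity)]
      have e : ((Φ + m k + s) / P + (P * (1 + g k))⁻¹ * (m (k + 1) - m k)) * (P * (1 + g k))
          = (Φ + m k + s) * (1 + g k) + (m (k + 1) - m k) := by field_simp
      rw [e]
      nlinarith [mul_le_mul_of_nonneg_left hx (hg k)]
  intro k hk
  exact (div_le_div_of_nonneg_right (h k hk) (hP k).le).trans (key k hk)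

/-- The discounted process `X k / ∏_{j<k} (1 + G j)` is dominated up to time `n` by a martingale
whose mean is that of `Φ`. -/
lemma exists_dominating_martingale
    {Ω : Type*} {m0 : MeasurableSpace Ω} {μ : Measure Ω} [IsProbabilityMeasure μ]
    {ℱ : Filtration ℕ m0} {M X G : ℕ → Ω → ℝ} {Φ : Ω → ℝ} {n : ℕ}
    (hM : Martingale M ℱ μ) (hM0 : ∀ ω, M 0 ω = 0)
    (hXadp : Adapted ℱ X) (hGadp : Adapted ℱ G)
    (hXnn : ∀ n ω, 0 ≤ X n ω) (hGnn : ∀ n ω, 0 ≤ G n ω)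
    (hΦ : Integrable Φ μ)
    (hrec : ∀ᵐ ω ∂μ, ∀ k ≤ n,
      X k ω ≤ Φ ω + M k ω + ∑ j ∈ Finset.range k, G j ω * X j ω) :
    ∃ W : ℕ → Ω → ℝ, Martingale W ℱ μ ∧ ∫ ω, W n ω ∂μ = ∫ ω, Φ ω ∂μ ∧
      ∀ k ≤ n, ∀ᵐ ω ∂μ, X k ω / ∏ j ∈ Finset.range k, (1 + G j ω) ≤ W k ω := by
  have hP1 : ∀ k ω, 1 ≤ ∏ j ∈ Finset.range k, (1 + G j ω) :=
    fun k ω => Finset.one_le_prod fun j _ => by linarith [hGnn j ω]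
  have hPm : ∀ k l, k ≤ l + 1 → Measurable[ℱ l] fun ω => ∏ j ∈ Finset.range k, (1 + G j ω) := by
    intro k l hkl
    refine Finset.measurable_fun_prod _ fun j hj => ?_
    have hj := Finset.mem_range.1 hj
    exact measurable_const.add ((hGadp j).mono (ℱ.mono (by omega)) le_rfl)
  let ξ : ℕ → Ω → ℝ := fun k ω => (∏ i ∈ Finset.range (k + 1), (1 + G i ω))⁻¹
  have hξ : StronglyAdapted ℱ ξ := fun k => ((hPm (k + 1) k le_rfl).inv).stronglyMeasurable
  have hξ1 : ∀ k ω, ξ k ω ≤ 1 := fun k ω => inv_le_one_of_one_le₀ (hP1 _ ω)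
  have hξ0 : ∀ k ω, 0 ≤ ξ k ω := fun k ω => inv_nonneg.2 (zero_le_one.trans (hP1 _ ω))
  let N : ℕ → Ω → ℝ := fun k => ∑ j ∈ Finset.range k, ξ j * (M (j + 1) - M j)
  have hN : Martingale N ℱ μ := by
    refine martingale_iff.2 ⟨?_, hM.submartingale.sum_mul_sub hξ hξ1 hξ0⟩
    have := (hM.neg.submartingale.sum_mul_sub hξ hξ1 hξ0).neg
    convert this using 1
    funext k
    simp only [N, Pi.neg_apply, ← Finset.sum_neg_distrib]
    refine Finset.sum_congr rfl fun j _ => ?_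
    ring
  have hN0 : ∫ ω, N n ω ∂μ = 0 := by
    have := hN.setIntegral_eq (Nat.zero_le n) (MeasurableSet.univ)
    simp only [setIntegral_univ] at this
    rw [← this]
    simp [N]
  refine ⟨fun k => μ[Φ | ℱ k] + N k, (martingale_condExp Φ ℱ μ).add hN, ?_, ?_⟩
  · simp only [Pi.add_apply]
    rw [integral_add integrable_condExp (hN.integrable n), hN0, integral_condExp (ℱ.le n), add_zero]
  · intro k hk
    have hle : ∀ᵐ ω ∂μ, X k ω / ∏ j ∈ Finset.range k, (1 + G j ω) ≤ Φ ω + N k ω := by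
      filter_upwards [hrec] with ω hω
      have := pathwise_gronwall (x := fun k => X k ω) (g := fun k => G k ω) (m := fun k => M k ω)
        (fun k => hGnn k ω) (hM0 ω) hω k hk
      simpa [N, ξ, Finset.sum_apply] using this
    have hZm : Measurable[ℱ k] fun ω => X k ω / ∏ j ∈ Finset.range k, (1 + G j ω) :=
      (hXadp k).div (hPm k k (by omega))
    have hZ0 : ∀ ω, 0 ≤ X k ω / ∏ j ∈ Finset.range k, (1 + G j ω) :=
      fun ω => div_nonneg (hXnn k ω) (zero_le_one.trans (hP1 k ω))
    have hZi : Integrable (fun ω => X k ω / ∏ j ∈ Finset.range k, (1 + G j ω)) μ := by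
      refine (hΦ.add (hN.integrable k)).mono' (hZm.mono (ℱ.le k) le_rfl).aestronglyMeasurable ?_
      filter_upwards [hle] with ω hω
      rw [Real.norm_of_nonneg (hZ0 ω)]
      exact hω
    have h1 := condExp_mono (m := ℱ k) hZi (hΦ.add (hN.integrable k)) hle
    rw [condExp_of_stronglyMeasurable (ℱ.le k) hZm.stronglyMeasurable hZi] at h1
    have h2 := condExp_add hΦ (hN.integrable k) (ℱ k)
    rw [condExp_of_stronglyMeasurable (ℱ.le k) (hN.stronglyAdapted k) (hN.integrable k)] at h2
    filter_upwards [h1, h2] with ω h1 h2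
    rw [← h2]
    exact h1

/-- Discrete stochastic Gronwall inequality (Kruse–Scheutzow):
if `X n ≤ F n + M n + ∑_{k<n} G k * X k` with `M` a martingale vanishing at `0`
and `X, F, G` nonnegative adapted sequences, then for `q ∈ (0,1)` and conjugate
exponents `α, α' ∈ [1,∞]` with `q·α < 1`,
`E[sup_{0≤k≤n} X_k^q] ≤ (1 + 1/(1-αq))^{1/α} ‖∏_{k<n}(1+G_k)^q‖_{L^{α'}} (E[sup_{0≤k≤n} F_k])^q`. -/
theorem discrete_stochastic_gronwall
    {Ω : Type*} {m0 : MeasurableSpace Ω} {μ : Measure Ω} [IsProbabilityMeasure μ]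
    (ℱ : Filtration ℕ m0)
    (M X F G : ℕ → Ω → ℝ)
    (hM : Martingale M ℱ μ) (hM0 : ∀ ω, M 0 ω = 0)
    (hXadp : Adapted ℱ X) (hFadp : Adapted ℱ F) (hGadp : Adapted ℱ G)
    (hXnn : ∀ n ω, 0 ≤ X n ω) (hFnn : ∀ n ω, 0 ≤ F n ω) (hGnn : ∀ n ω, 0 ≤ G n ω)
    (hX0 : Integrable (X 0) μ)
    (hrec : ∀ n, ∀ᵐ ω ∂μ,
      X n ω ≤ F n ω + M n ω + ∑ k ∈ Finset.range n, G k ω * X k ω)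
    (q : ℝ) (hq0 : 0 < q) (hq1 : q < 1)
    (α α' : ℝ≥0∞) (hα : 1 ≤ α) (hα' : 1 ≤ α')
    (hconj : 1 / α + 1 / α' = 1)
    (hqα : ENNReal.ofReal q * α < 1)
    (n : ℕ) :
    ∫⁻ ω, ENNReal.ofReal (⨆ k : Fin (n + 1), X k ω ^ q) ∂μ
      ≤ (1 + 1 / (1 - ENNReal.ofReal q * α)) ^ (1 / α).toReal
        * eLpNorm (fun ω => ∏ k ∈ Finset.range n, (1 + G k ω) ^ q) α' μ
        * (∫⁻ ω, ENNReal.ofReal (⨆ k : Fin (n + 1), F k ω) ∂μ) ^ q := by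
  have hα0 : α ≠ 0 := (zero_lt_one.trans_le hα).ne'
  have hαtop : α ≠ ∞ := by
    rintro rfl
    rw [ENNReal.mul_top (by simpa using hq0)] at hqα
    simp at hqα
  set r : ℝ := α.toReal with hr
  have hr0 : 0 < r := ENNReal.toReal_pos hα0 hαtop
  have hqr : ENNReal.ofReal q * α = ENNReal.ofReal (q * r) := by
    rw [ENNReal.ofReal_mul hq0.le, hr, ENNReal.ofReal_toReal hαtop]
  have hp0 : 0 < q * r := mul_pos hq0 hr0
  have hp1 : q * r < 1 := by
    rw [hqr] at hqα
    exact ENNReal.ofReal_lt_one.1 hqα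
  have hrinv : (1 / α).toReal = 1 / r := by simp [hr]
  set Φ : Ω → ℝ := fun ω => ⨆ k : Fin (n + 1), F k ω with hΦdef
  have hΦm : Measurable Φ :=
    Measurable.iSup fun k => (hFadp k).mono (ℱ.le k) le_rfl
  have hFΦ : ∀ k ≤ n, ∀ ω, F k ω ≤ Φ ω := fun k hk ω =>
    le_ciSup (f := fun k : Fin (n + 1) => F k ω) (Set.finite_range _).bddAbove
      ⟨k, Nat.lt_succ_of_le hk⟩
  have hΦ0 : ∀ ω, 0 ≤ Φ ω := fun ω => (hFnn 0 ω).trans (hFΦ 0 (Nat.zero_le n) ω)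
  have hP1 : ∀ k ω, 1 ≤ ∏ j ∈ Finset.range k, (1 + G j ω) :=
    fun k ω => Finset.one_le_prod fun j _ => by linarith [hGnn j ω]
  have hPm : Measurable fun ω => ∏ j ∈ Finset.range n, (1 + G j ω) ^ q :=
    Finset.measurable_fun_prod _ fun j _ =>
      (measurable_const.add ((hGadp j).mono (ℱ.le j) le_rfl)).pow_const q
  have hPq1 : ∀ ω, 1 ≤ ∏ j ∈ Finset.range n, (1 + G j ω) ^ q := fun ω =>
    Finset.one_le_prod fun j _ => Real.one_le_rpow (by linarith [hGnn j ω]) hq0.le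
  by_cases hA : ∫⁻ ω, ENNReal.ofReal (Φ ω) ∂μ = ∞
  · -- The other two factors are nonzero, so the right-hand side is infinite.
    have h1 : eLpNorm (fun ω => ∏ k ∈ Finset.range n, (1 + G k ω) ^ q) α' μ ≠ 0 := by
      rw [Ne, eLpNorm_eq_zero_iff hPm.aestronglyMeasurable (zero_lt_one.trans_le hα').ne']
      intro h
      obtain ⟨ω, hω⟩ := h.exists
      have := hPq1 ω
      rw [show ∏ j ∈ Finset.range n, (1 + G j ω) ^ q = 0 from hω] at this
      exact absurd this (by simp)
    have h2 : (1 + 1 / (1 - ENNReal.ofReal q * α)) ^ (1 / α).toReal ≠ 0 := by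
      have : (1 : ℝ≥0∞) ≤ (1 + 1 / (1 - ENNReal.ofReal q * α)) ^ (1 / α).toReal :=
        ENNReal.one_le_rpow le_self_add (by rw [hrinv]; positivity)
      exact (zero_lt_one.trans_le this).ne'
    rw [hA, ENNReal.top_rpow_of_pos hq0, ENNReal.mul_top (mul_ne_zero h2 h1)]
    exact le_top
  have hΦi : Integrable Φ μ :=
    (lintegral_ofReal_ne_top_iff_integrable hΦm.aestronglyMeasurable
      (Filter.Eventually.of_forall hΦ0)).1 hA
  have hrec' : ∀ᵐ ω ∂μ, ∀ k ≤ n,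
      X k ω ≤ Φ ω + M k ω + ∑ j ∈ Finset.range k, G j ω * X j ω := by
    filter_upwards [ae_all_iff.2 hrec] with ω hω k hk
    linarith [hω k, hFΦ k hk ω]
  obtain ⟨W, hW, hWint, hXW⟩ :=
    exists_dominating_martingale hM hM0 hXadp hGadp hXnn hGnn hΦi hrec'
  have hXW' : ∀ᵐ ω ∂μ, ∀ k ≤ n, X k ω / ∏ j ∈ Finset.range k, (1 + G j ω) ≤ W k ω := by
    rw [ae_all_iff]
    intro k
    by_cases hk : k ≤ n
    · filter_upwards [hXW k hk] with ω h _ using h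
    · exact Filter.Eventually.of_forall fun ω h => absurd h hk
  have hsub : Submartingale W⁺ ℱ μ := hW.submartingale.pos
  set S : Ω → ℝ := fun ω =>
    (Finset.range (n + 1)).sup' Finset.nonempty_range_add_one fun k => W⁺ k ω with hS
  have hSm : Measurable S := by
    have := Finset.measurable_sup' (f := W⁺) (Finset.nonempty_range_add_one (n := n))
      fun k _ => ((hsub.stronglyAdapted k).mono (ℱ.le k)).measurable
    convert this using 1
    funext ω
    simp [hS, Finset.sup'_apply]
  have hWS : ∀ k ≤ n, ∀ ω, W⁺ k ω ≤ S ω := fun k hk ω =>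
    Finset.le_sup' (fun k => W⁺ k ω) (Finset.mem_range.2 (Nat.lt_succ_of_le hk))
  have hWpos : ∀ k ω, 0 ≤ W⁺ k ω := fun k ω => posPart_nonneg W k ω
  have hS0 : ∀ ω, 0 ≤ S ω := fun ω => (hWpos 0 ω).trans (hWS 0 (Nat.zero_le n) ω)
  have hWn : ∫ ω, W⁺ n ω ∂μ = ∫ ω, Φ ω ∂μ := by
    rw [← hWint]
    refine integral_congr_ae ?_
    filter_upwards [hXW n le_rfl] with ω hω
    have : 0 ≤ W n ω := (div_nonneg (hXnn n ω) (zero_le_one.trans (hP1 n ω))).trans hω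
    simp [Pi.posPart_apply, posPart_eq_self.2 this]
  have hweak : ∀ t : ℝ, 0 < t →
      ENNReal.ofReal t * μ {ω | t ≤ S ω} ≤ ENNReal.ofReal (∫ ω, Φ ω ∂μ) := by
    intro t ht
    have h := maximal_ineq hsub (fun k ω => hWpos k ω) (ε := t.toNNReal) n
    rw [Real.coe_toNNReal t ht.le] at h
    refine h.trans (ENNReal.ofReal_le_ofReal ?_)
    rw [← hWn]
    exact setIntegral_le_integral (hsub.integrable n) (Filter.Eventually.of_forall (hWpos n))
  have hmom := lintegral_rpow_le_of_weak hSm hS0 (integral_nonneg hΦ0) hweak hp0 hp1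
  have hSnorm : eLpNorm (fun ω => S ω ^ q) α μ ≤
      (1 + 1 / (1 - ENNReal.ofReal q * α)) ^ (1 / α).toReal
        * (∫⁻ ω, ENNReal.ofReal (Φ ω) ∂μ) ^ q := by
    have h1p : 0 < 1 - q * r := by linarith
    rw [eLpNorm_eq_lintegral_rpow_enorm_toReal hα0 hαtop, hrinv, ← hr]
    have e1 : ∀ ω, ‖S ω ^ q‖ₑ ^ r = ENNReal.ofReal (S ω ^ (q * r)) := fun ω => by
      rw [Real.enorm_of_nonneg (Real.rpow_nonneg (hS0 ω) _),
        ENNReal.ofReal_rpow_of_nonneg (Real.rpow_nonneg (hS0 ω) _) hr0.le, ← Real.rpow_mul (hS0 ω)]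
    simp_rw [e1]
    have e2 : (∫⁻ ω, ENNReal.ofReal (Φ ω) ∂μ) ^ q
        = ((∫⁻ ω, ENNReal.ofReal (Φ ω) ∂μ) ^ (q * r)) ^ (1 / r) := by
      rw [← ENNReal.rpow_mul]
      congr 1
      field_simp
    rw [e2, ← ENNReal.mul_rpow_of_nonneg _ _ (by positivity)]
    refine ENNReal.rpow_le_rpow (hmom.trans ?_) (by positivity)
    rw [← ofReal_integral_eq_lintegral_ofReal hΦi (Filter.Eventually.of_forall hΦ0),
      ENNReal.ofReal_rpow_of_nonneg (integral_nonneg hΦ0) hp0.le, hqr,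
      ENNReal.ofReal_div_of_pos h1p, div_eq_mul_inv, mul_comm, ENNReal.ofReal_sub _ hp0.le,
      ENNReal.ofReal_one, one_div]
    gcongr
    exact le_add_self
  have hpt : ∀ᵐ ω ∂μ, ENNReal.ofReal (⨆ k : Fin (n + 1), X k ω ^ q)
      ≤ ‖((fun ω => ∏ k ∈ Finset.range n, (1 + G k ω) ^ q) • (fun ω => S ω ^ q)) ω‖ₑ := by
    filter_upwards [hXW'] with ω hω
    have hPn0 : 0 ≤ ∏ j ∈ Finset.range n, (1 + G j ω) := zero_le_one.trans (hP1 n ω)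
    rw [Pi.smul_apply', smul_eq_mul, Real.enorm_of_nonneg
      (mul_nonneg (zero_le_one.trans (hPq1 ω)) (Real.rpow_nonneg (hS0 ω) _))]
    refine ENNReal.ofReal_le_ofReal (ciSup_le fun k => ?_)
    have hk : (k : ℕ) ≤ n := Nat.le_of_lt_succ k.2
    rw [Real.finsetProd_rpow _ _ fun j _ => by linarith [hGnn j ω], ← Real.mul_rpow hPn0 (hS0 ω)]
    refine Real.rpow_le_rpow (hXnn k ω) ?_ hq0.le
    have h1 := hω k hk
    rw [div_le_iff₀ (zero_lt_one.trans_le (hP1 k ω))] at h1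
    have h2 : W k ω ≤ S ω := (le_posPart (W k ω)).trans (hWS k hk ω)
    have h3 : ∏ j ∈ Finset.range (k : ℕ), (1 + G j ω) ≤ ∏ j ∈ Finset.range n, (1 + G j ω) :=
      Finset.prod_le_prod_of_subset_of_one_le (Finset.range_mono hk)
        (fun j _ => by linarith [hGnn j ω]) fun j _ _ => by linarith [hGnn j ω]
    calc X k ω ≤ W k ω * ∏ j ∈ Finset.range (k : ℕ), (1 + G j ω) := h1
      _ ≤ S ω * ∏ j ∈ Finset.range n, (1 + G j ω) :=
        mul_le_mul h2 h3 (zero_le_one.trans (hP1 k ω)) (hS0 ω)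
      _ = _ := mul_comm _ _
  have : ENNReal.HolderTriple α' α 1 := ⟨by simpa [add_comm] using hconj⟩
  calc _ ≤ eLpNorm ((fun ω => ∏ k ∈ Finset.range n, (1 + G k ω) ^ q) • (fun ω => S ω ^ q)) 1 μ := by
        rw [eLpNorm_one_eq_lintegral_enorm]
        exact lintegral_mono_ae hpt
    _ ≤ eLpNorm (fun ω => ∏ k ∈ Finset.range n, (1 + G k ω) ^ q) α' μ
        * eLpNorm (fun ω => S ω ^ q) α μ :=
        eLpNorm_smul_le_mul_eLpNorm (hSm.pow_const q).aestronglyMeasurable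
          hPm.aestronglyMeasurable
    _ ≤ _ := by
        refine (mul_le_mul_right hSnorm _).trans_eq ?_
        ring
end

section
/- Generalized discrete stochastic Gronwall inequality: Let (Ω, F, {F_n}_{n∈ℕ}, P) be a filtered probability space and let {M_n}_{n∈ℕ} be an {F_n}-martingale with M_0 = 0. Let {X_n}, {Y_n}, {F_n}, {G_n} be sequences of nonnegative adapted real random variables with E[X_0] < ∞, and suppose that for all n ∈ ℕ: X_n + Y_n ≤ F_n + M_n + Σ_{k=0}^{n-1} G_k X_k. Then for any q ∈ (0,1) and any pair of conjugate exponents α, α' ∈ [1,∞] with qα < 1, and for every n ∈ ℕ, one has E[sup_{0≤k≤n} (X_k + Y_k)^q] ≤ (1 + 1/(1-αq))^{1/α} · ‖Π_{k=0}^{n-1} (1+G_k)^q‖_{L^{α'}(Ω)} · (E[sup_{0≤k≤n} F_k])^q. -/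
open MeasureTheory Finset
open scoped NNReal ENNReal

/-!
Write `Z = X + Y`, `F* n = sup_{k ≤ n} F k` and `Π n = ∏_{k < n} (1 + G k)`. Since `Π (k+1)` is
`ℱ k`-measurable and at least `1`, the transform `N n = ∑_{k < n} (M (k+1) - M k) / Π (k+1)` is a
martingale, and discounting the recursion by `Π` gives `Z k ≤ Π k * (F* k + N k)` almost surely
(`discounted_bound`).

If `F* n` is integrable, with expectation `a`, then `W k = E[F* n | ℱ k] + N k` is a martingale
which dominates `F* k + N k ≥ 0` for `k ≤ n` and has expectation `a`. Doob's maximal inequality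
gives the weak-type bound `c * P(sup_{k ≤ n} W k ≥ c) ≤ a`, and the layer cake formula turns it
into `E[(sup_{k ≤ n} W k)^p] ≤ a^p / (1 - p)` for every `p ∈ (0, 1)`
(`lintegral_rpow_le_of_weak_type`). Taking `p = α q`, Hölder's inequality applied to
`sup_k Z_k^q ≤ (sup_k W_k)^q * (Π n)^q` yields the claim, even with the smaller constant
`(1 / (1 - α q))^{1/α}`. If `E[F* n] = ∞`, the right-hand side is infinite, because the remaining
two factors are nonzero.
-/

lemma one_le_prod_one_add {G : ℕ → ℝ} (hG : ∀ k, 0 ≤ G k) (n : ℕ) :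
    1 ≤ ∏ k ∈ range n, (1 + G k) := by
  induction n with
  | zero => simp
  | succ n ih =>
    rw [prod_range_succ]
    exact one_le_mul_of_one_le_of_one_le ih (by linarith [hG n])

/-- The pointwise Gronwall step: the recursion for `Z` becomes, after discounting by
`Π k = ∏_{j < k} (1 + G j)`, a bound without feedback term. -/
lemma discounted_bound {F M G Z : ℕ → ℝ} (hM0 : M 0 = 0) (hG : ∀ k, 0 ≤ G k)
    (hrec : ∀ n, Z n ≤ F n + M n + ∑ k ∈ range n, G k * Z k) (n : ℕ) :
    Z n ≤ (∏ k ∈ range n, (1 + G k)) *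
      ((range (n + 1)).sup' nonempty_range_add_one F +
        ∑ k ∈ range n, (∏ j ∈ range (k + 1), (1 + G j))⁻¹ * (M (k + 1) - M k)) := by
  set A : ℕ → ℝ := fun n => (range (n + 1)).sup' nonempty_range_add_one F with hA
  set P : ℕ → ℝ := fun n => ∏ k ∈ range n, (1 + G k) with hP
  set N : ℕ → ℝ := fun n => ∑ k ∈ range n, (P (k + 1))⁻¹ * (M (k + 1) - M k) with hN
  have hFA : ∀ n, F n ≤ A n := fun n => le_sup' F (by simp)
  have hAmono : ∀ n, A n ≤ A (n + 1) := fun n =>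
    sup'_mono F (range_subset_range.2 (by omega)) nonempty_range_add_one
  have hP1 : ∀ n, 1 ≤ P n := fun n =>
    one_le_prod_one_add hG n
  have hPs : ∀ n, P (n + 1) = P n * (1 + G n) := fun n => prod_range_succ _ n
  have key : ∀ n, A n + M n + ∑ k ∈ range n, G k * Z k ≤ P n * (A n + N n) := by
    intro n
    induction n with
    | zero => simp [hP, hN, hM0]
    | succ n ih =>
      have hNs : N (n + 1) = N n + (P (n + 1))⁻¹ * (M (n + 1) - M n) := sum_range_succ _ n
      have hpos : 0 < P (n + 1) := zero_lt_one.trans_le (hP1 _)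
      have h1 : P (n + 1) * N (n + 1) = P (n + 1) * N n + (M (n + 1) - M n) := by
        rw [hNs]; field_simp
      have hZ : Z n ≤ A n + M n + ∑ k ∈ range n, G k * Z k :=
        (hrec n).trans (by linarith [hFA n])
      have h2 : G n * Z n ≤ G n * (P n * (A n + N n)) :=
        mul_le_mul_of_nonneg_left (hZ.trans ih) (hG n)
      have h3 : (A (n + 1) - A n) ≤ P (n + 1) * (A (n + 1) - A n) :=
        le_mul_of_one_le_left (by linarith [hAmono n]) (hP1 _)
      have h4 : P (n + 1) * (A n + N n) = P n * (A n + N n) + G n * (P n * (A n + N n)) := by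
        rw [hPs]; ring
      rw [sum_range_succ, mul_add, h1]
      linarith
  exact (hrec n).trans (le_trans (by linarith [hFA n]) (key n))

lemma lintegral_rpow_le_of_weak_type_pos {Ω : Type*} {m0 : MeasurableSpace Ω} {μ : Measure Ω}
    [IsProbabilityMeasure μ] {S : Ω → ℝ} (hS : Measurable S) (hS0 : ∀ ω, 0 ≤ S ω)
    {a p : ℝ} (ha : 0 < a) (hp0 : 0 < p) (hp1 : p < 1)
    (hweak : ∀ c : ℝ, 0 < c → ENNReal.ofReal c * μ {ω | c ≤ S ω} ≤ ENNReal.ofReal a) :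
    ∫⁻ ω, ENNReal.ofReal (S ω ^ p) ∂μ ≤ ENNReal.ofReal (1 / (1 - p) * a ^ p) := by
  rw [lintegral_rpow_eq_lintegral_meas_le_mul μ (.of_forall hS0) hS.aemeasurable hp0,
    ← Set.Ioc_union_Ioi_eq_Ioi ha.le,
    lintegral_union measurableSet_Ioi (Set.Ioc_disjoint_Ioi le_rfl)]
  -- Below level `a` the tail probability is bounded by `1`, above it by `a / t`.
  have h1 : ∫⁻ t in Set.Ioc 0 a, μ {ω | t ≤ S ω} * ENNReal.ofReal (t ^ (p - 1))
      ≤ ENNReal.ofReal (a ^ p / p) := by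
    calc _ ≤ ∫⁻ t in Set.Ioc 0 a, ENNReal.ofReal (t ^ (p - 1)) :=
          lintegral_mono fun t => mul_le_of_le_one_left' prob_le_one
      _ = ENNReal.ofReal (∫ t in Set.Ioc 0 a, t ^ (p - 1)) := by
          rw [ofReal_integral_eq_lintegral_ofReal]
          · exact (intervalIntegrable_iff_integrableOn_Ioc_of_le ha.le).1
              (intervalIntegral.intervalIntegrable_rpow' (by linarith))
          · exact ae_restrict_of_forall_mem measurableSet_Ioc
              fun t ht => Real.rpow_nonneg ht.1.le _
      _ = _ := by
          rw [← intervalIntegral.integral_of_le ha.le, integral_rpow (.inl (by linarith))]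
          simp [Real.zero_rpow hp0.ne']
  have h2 : ∫⁻ t in Set.Ioi a, μ {ω | t ≤ S ω} * ENNReal.ofReal (t ^ (p - 1))
      ≤ ENNReal.ofReal (a ^ p / (1 - p)) := by
    calc _ ≤ ∫⁻ t in Set.Ioi a, ENNReal.ofReal (a * t ^ (p - 2)) := by
          refine setLIntegral_mono' measurableSet_Ioi fun t ht => ?_
          have ht0 : 0 < t := ha.trans ht
          have : t ^ (p - 1) = t * t ^ (p - 2) := by
            rw [← Real.rpow_one_add' ht0.le (by linarith)]; congr 1; ring
          rw [this, ENNReal.ofReal_mul ht0.le, ENNReal.ofReal_mul ha.le, ← mul_assoc,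
            mul_comm (μ _)]
          gcongr
          exact hweak t ht0
      _ = ENNReal.ofReal (∫ t in Set.Ioi a, a * t ^ (p - 2)) := by
          rw [ofReal_integral_eq_lintegral_ofReal]
          · exact (integrableOn_Ioi_rpow_of_lt (by linarith) ha).const_mul a
          · exact ae_restrict_of_forall_mem measurableSet_Ioi
              fun t ht => mul_nonneg ha.le (Real.rpow_nonneg (ha.trans ht).le _)
      _ = _ := by
          rw [integral_const_mul, integral_Ioi_rpow_of_lt (by linarith) ha]
          congr 1
          have : a ^ p = a * a ^ (p - 2 + 1) := by
            rw [← Real.rpow_one_add' ha.le (by linarith)]; congr 1; ring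
          rw [this, show p - 2 + 1 = -(1 - p) by ring, neg_div_neg_eq, mul_div_assoc]
  have hpa : 0 < a ^ p := Real.rpow_pos_of_pos ha p
  have hp1' : 0 < 1 - p := by linarith
  calc _ ≤ ENNReal.ofReal p * (ENNReal.ofReal (a ^ p / p) + ENNReal.ofReal (a ^ p / (1 - p))) := by
        gcongr
    _ = _ := by
        rw [← ENNReal.ofReal_add (by positivity) (by positivity), ← ENNReal.ofReal_mul hp0.le]
        congr 1
        field_simp
        ring

/-- A weak-type `(1,1)` bound with constant `a` controls all moments of order `p < 1`. -/
lemma lintegral_rpow_le_of_weak_type {Ω : Type*} {m0 : MeasurableSpace Ω} {μ : Measure Ω}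
    [IsProbabilityMeasure μ] {S : Ω → ℝ} (hS : Measurable S) (hS0 : ∀ ω, 0 ≤ S ω)
    {a p : ℝ} (ha : 0 ≤ a) (hp0 : 0 < p) (hp1 : p < 1)
    (hweak : ∀ c : ℝ, 0 < c → ENNReal.ofReal c * μ {ω | c ≤ S ω} ≤ ENNReal.ofReal a) :
    ∫⁻ ω, ENNReal.ofReal (S ω ^ p) ∂μ ≤ ENNReal.ofReal (1 / (1 - p) * a ^ p) := by
  -- The bound for every `b > a` passes to the limit `b → a`; this also covers `a = 0`.
  have hcont : Continuous fun b : ℝ => ENNReal.ofReal (1 / (1 - p) * b ^ p) :=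
    ENNReal.continuous_ofReal.comp
      (continuous_const.mul (Real.continuous_rpow_const hp0.le))
  refine ge_of_tendsto (hcont.continuousWithinAt (s := Set.Ioi a) (x := a)) ?_
  filter_upwards [self_mem_nhdsWithin] with b hb
  exact lintegral_rpow_le_of_weak_type_pos hS hS0 (ha.trans_lt hb) hp0 hp1
    fun c hc => (hweak c hc).trans (ENNReal.ofReal_le_ofReal (le_of_lt hb))

lemma martingale_sum_mul_sub {Ω : Type*} {m0 : MeasurableSpace Ω} {μ : Measure Ω}
    [IsFiniteMeasure μ] {ℱ : Filtration ℕ m0} {M ξ : ℕ → Ω → ℝ} (hM : Martingale M ℱ μ)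
    (hξ : StronglyAdapted ℱ ξ) (h1 : ∀ n ω, ξ n ω ≤ 1) (h0 : ∀ n ω, 0 ≤ ξ n ω) :
    Martingale (fun n => ∑ k ∈ range n, ξ k * (M (k + 1) - M k)) ℱ μ := by
  refine martingale_iff.2 ⟨?_, hM.submartingale.sum_mul_sub hξ h1 h0⟩
  have h := (hM.neg.submartingale.sum_mul_sub hξ h1 h0).neg
  convert! h using 1
  ext n ω
  simp only [Pi.neg_apply, Finset.sum_apply, Pi.mul_apply, Pi.sub_apply, ← sum_neg_distrib]
  exact sum_congr rfl fun k _ => by ring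

lemma iSup_fin_eq_sup' (f : ℕ → ℝ) (n : ℕ) :
    ⨆ k : Fin (n + 1), f k = (range (n + 1)).sup' nonempty_range_add_one f := by
  apply le_antisymm
  · exact ciSup_le fun k => le_sup' f (mem_range.2 k.2)
  · refine sup'_le _ _ fun k hk => ?_
    exact le_ciSup (f := fun k : Fin (n + 1) => f k) (Set.finite_range _).bddAbove
      ⟨k, mem_range.1 hk⟩

/-- Doob's maximal inequality when positivity holds only almost surely: if a martingale `W` is
almost surely nonnegative at time `n`, the running supremum of `W⁺` has weak-type constant `E[W n]`. -/
lemma weak_type_sup_pos {Ω : Type*} {m0 : MeasurableSpace Ω} {μ : Measure Ω}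
    [IsProbabilityMeasure μ] {ℱ : Filtration ℕ m0} {W : ℕ → Ω → ℝ} (hW : Martingale W ℱ μ)
    (n : ℕ) (hn : 0 ≤ᵐ[μ] W n) (c : ℝ) (hc : 0 < c) :
    ENNReal.ofReal c * μ {ω | c ≤ (range (n + 1)).sup' nonempty_range_add_one
      fun k => (W k ω)⁺} ≤ ENNReal.ofReal (∫ ω, W n ω ∂μ) := by
  have hsub := hW.submartingale.pos
  have h := maximal_ineq hsub (fun k ω => posPart_nonneg (W k ω)) (ε := c.toNNReal) n
  rw [Real.coe_toNNReal c hc.le] at h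
  refine h.trans (ENNReal.ofReal_le_ofReal ?_)
  calc _ ≤ ∫ ω, (W⁺) n ω ∂μ :=
        setIntegral_le_integral (hsub.integrable n) (.of_forall fun ω => posPart_nonneg (W n ω))
    _ = ∫ ω, W n ω ∂μ := by
        refine integral_congr_ae ?_
        filter_upwards [hn] with ω hω
        exact posPart_of_nonneg hω

/-- Generalized discrete stochastic Gronwall inequality:
if `X n + Y n ≤ F n + M n + ∑_{k<n} G k * X k` with `M` a martingale vanishing at `0`
and `X, Y, F, G` nonnegative adapted sequences, then for `q ∈ (0,1)` and conjugate
exponents `α, α' ∈ [1,∞]` with `q·α < 1`,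
`E[sup_{0≤k≤n} (X_k+Y_k)^q]
  ≤ (1 + 1/(1-αq))^{1/α} ‖∏_{k<n}(1+G_k)^q‖_{L^{α'}} (E[sup_{0≤k≤n} F_k])^q`. -/
theorem discrete_stochastic_gronwall_generalized
    {Ω : Type*} {m0 : MeasurableSpace Ω} {μ : Measure Ω} [IsProbabilityMeasure μ]
    (ℱ : Filtration ℕ m0)
    (M X Y F G : ℕ → Ω → ℝ)
    (hM : Martingale M ℱ μ) (hM0 : ∀ ω, M 0 ω = 0)
    (hXadp : Adapted ℱ X) (hYadp : Adapted ℱ Y) (hFadp : Adapted ℱ F)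
    (hGadp : Adapted ℱ G)
    (hXnn : ∀ n ω, 0 ≤ X n ω) (hYnn : ∀ n ω, 0 ≤ Y n ω)
    (hFnn : ∀ n ω, 0 ≤ F n ω) (hGnn : ∀ n ω, 0 ≤ G n ω)
    (hX0 : Integrable (X 0) μ)
    (hrec : ∀ n, ∀ᵐ ω ∂μ,
      X n ω + Y n ω ≤ F n ω + M n ω + ∑ k ∈ Finset.range n, G k ω * X k ω)
    (q : ℝ) (hq0 : 0 < q) (hq1 : q < 1)
    (α α' : ℝ≥0∞) (hα : 1 ≤ α) (hα' : 1 ≤ α')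
    (hconj : 1 / α + 1 / α' = 1)
    (hqα : ENNReal.ofReal q * α < 1)
    (n : ℕ) :
    ∫⁻ ω, ENNReal.ofReal (⨆ k : Fin (n + 1), (X k ω + Y k ω) ^ q) ∂μ
      ≤ (1 + 1 / (1 - ENNReal.ofReal q * α)) ^ (1 / α).toReal
        * eLpNorm (fun ω => ∏ k ∈ Finset.range n, (1 + G k ω) ^ q) α' μ
        * (∫⁻ ω, ENNReal.ofReal (⨆ k : Fin (n + 1), F k ω) ∂μ) ^ q := by
  simp only [fun ω => iSup_fin_eq_sup' (fun k => (X k ω + Y k ω) ^ q) n,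
    fun ω => iSup_fin_eq_sup' (fun k => F k ω) n]
  -- Real forms of the exponents: `r = α`, `p = α q`.
  have hαtop : α ≠ ∞ := by
    rintro rfl
    rw [ENNReal.mul_top (by simpa using hq0)] at hqα
    exact absurd hqα (by simp)
  have hα0 : α ≠ 0 := (zero_lt_one.trans_le hα).ne'
  set r : ℝ := α.toReal with hr
  have hr0 : 0 < r := ENNReal.toReal_pos hα0 hαtop
  have hαr : ENNReal.ofReal r = α := ENNReal.ofReal_toReal hαtop
  set p : ℝ := q * r with hp
  have hp0 : 0 < p := mul_pos hq0 hr0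
  have hqαp : ENNReal.ofReal q * α = ENNReal.ofReal p := by
    rw [← hαr, ← ENNReal.ofReal_mul hq0.le]
  have hp1 : p < 1 := by
    rw [hqαp] at hqα
    exact ENNReal.ofReal_lt_one.1 hqα
  have hC : ENNReal.ofReal (1 / (1 - p)) ≤ 1 + 1 / (1 - ENNReal.ofReal q * α) := by
    rw [hqαp, ENNReal.ofReal_div_of_pos (by linarith), ENNReal.ofReal_sub _ hp0.le,
      ENNReal.ofReal_one]
    exact le_add_self
  have h1α : (1 / α).toReal = 1 / r := by simp [hr]
  rw [h1α]
  -- The discount factor.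
  set P : ℕ → Ω → ℝ := fun n ω => ∏ k ∈ range n, (1 + G k ω) with hPdef
  have hP1 : ∀ k ω, 1 ≤ P k ω := fun k ω => one_le_prod_one_add (fun k => hGnn k ω) k
  have hPadp : ∀ k, Measurable[ℱ k] (P (k + 1)) := fun k =>
    Finset.measurable_fun_prod _ fun j hj =>
      (hGadp.measurable_le (Nat.lt_succ_iff.1 (mem_range.1 hj))).const_add 1
  have hPmeas : Measurable (P n) :=
    Finset.measurable_fun_prod _ fun j _ => hGadp.measurable.const_add 1
  have hPq : (fun ω => ∏ k ∈ range n, (1 + G k ω) ^ q) = fun ω => P n ω ^ q := by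
    ext ω
    exact Real.finsetProd_rpow _ _ (fun k _ => by linarith [hGnn k ω]) q
  rw [hPq]
  have hPqm : Measurable fun ω => P n ω ^ q := hPmeas.pow_const q
  -- The running supremum of `F`.
  set A : ℕ → Ω → ℝ := fun n ω => (range (n + 1)).sup' nonempty_range_add_one
    (fun k => F k ω) with hAdef
  have hA0 : ∀ k ω, 0 ≤ A k ω := fun k ω =>
    (hFnn k ω).trans (le_sup' (fun k => F k ω) (by simp))
  have hAmono : ∀ k, k ≤ n → ∀ ω, A k ω ≤ A n ω := fun k hk ω =>
    sup'_mono _ (range_subset_range.2 (by omega)) nonempty_range_add_one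
  have hAadp : ∀ k, Measurable[ℱ k] (A k) := fun k =>
    @Finset.measurable_range_sup'' ℝ _ Ω (ℱ k) _ _ F k fun j hj => hFadp.measurable_le hj
  have hAmeas : ∀ k, Measurable (A k) := fun k => (hAadp k).mono (ℱ.le k) le_rfl
  by_cases hfin : ∫⁻ ω, ENNReal.ofReal (A n ω) ∂μ = ∞
  · rw [show (∫⁻ ω, ENNReal.ofReal (A n ω) ∂μ) = ∞ from hfin, ENNReal.top_rpow_of_pos hq0,
      ENNReal.mul_top]
    · exact le_top
    · refine mul_ne_zero ?_ ?_
      · have : (0 : ℝ≥0∞) < (1 + 1 / (1 - ENNReal.ofReal q * α)) ^ (1 / r) :=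
          ENNReal.rpow_pos_of_nonneg (by simp) (by positivity)
        exact this.ne'
      · rw [Ne, eLpNorm_eq_zero_iff hPqm.aestronglyMeasurable (zero_lt_one.trans_le hα').ne']
        intro h
        obtain ⟨ω, hω⟩ := h.exists
        exact (Real.rpow_pos_of_pos (zero_lt_one.trans_le (hP1 n ω)) q).ne' hω
  have hAint : Integrable (A n) μ :=
    ⟨(hAmeas n).aestronglyMeasurable, (hasFiniteIntegral_iff_ofReal (.of_forall (hA0 n))).2
      (lt_top_iff_ne_top.2 hfin)⟩
  set a : ℝ := ∫ ω, A n ω ∂μ with ha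
  have ha0 : 0 ≤ a := integral_nonneg (hA0 n)
  have haE : ∫⁻ ω, ENNReal.ofReal (A n ω) ∂μ = ENNReal.ofReal a :=
    (ofReal_integral_eq_lintegral_ofReal hAint (.of_forall (hA0 n))).symm
  rw [haE]
  -- The discounted martingale `N`, and the martingale `W` dominating `A + N` up to time `n`.
  set N : ℕ → Ω → ℝ := fun n => ∑ k ∈ range n, (P (k + 1))⁻¹ * (M (k + 1) - M k) with hNdef
  have hNmart : Martingale N ℱ μ :=
    martingale_sum_mul_sub (ξ := fun k => (P (k + 1))⁻¹) hM
      (fun k => (hPadp k).inv.stronglyMeasurable)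
      (fun k ω => inv_le_one_of_one_le₀ (hP1 (k + 1) ω))
      (fun k ω => inv_nonneg.2 (zero_le_one.trans (hP1 (k + 1) ω)))
  have hNint : ∫ ω, N n ω ∂μ = 0 := by
    have h := hNmart.setIntegral_eq n.zero_le MeasurableSet.univ
    simp only [setIntegral_univ] at h
    rw [← h]
    simp [hNdef]
  set W : ℕ → Ω → ℝ := (fun k => μ[A n | ℱ k]) + N with hWdef
  have hWmart : Martingale W ℱ μ := (martingale_condExp (A n) ℱ μ).add hNmart
  have hWint : ∫ ω, W n ω ∂μ = a := by
    simp only [hWdef, Pi.add_apply]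
    rw [integral_add integrable_condExp (hNmart.integrable n), integral_condExp (ℱ.le n), hNint,
      add_zero]
  have hAW : ∀ k ≤ n, ∀ᵐ ω ∂μ, A k ω + N k ω ≤ W k ω := by
    intro k hk
    have hAk : Integrable (A k) μ := hAint.mono' (hAmeas k).aestronglyMeasurable
      (.of_forall fun ω => by rw [Real.norm_of_nonneg (hA0 k ω)]; exact hAmono k hk ω)
    have h := condExp_mono (m := ℱ k) hAk hAint (.of_forall (hAmono k hk))
    rw [condExp_of_stronglyMeasurable (ℱ.le k) (hAadp k).stronglyMeasurable hAk] at h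
    filter_upwards [h] with ω hω
    exact add_le_add_left hω _
  have hZ : ∀ᵐ ω ∂μ, ∀ k, X k ω + Y k ω ≤ P k ω * (A k ω + N k ω) := by
    filter_upwards [ae_all_iff.2 hrec] with ω hω k
    have := discounted_bound (F := fun k => F k ω) (M := fun k => M k ω) (G := fun k => G k ω)
      (Z := fun k => X k ω + Y k ω) (hM0 ω) (fun k => hGnn k ω)
      (fun m => (hω m).trans (by
        gcongr with j
        · exact hGnn j ω
        · linarith [hYnn j ω])) k
    simpa [hNdef, hAdef, hPdef] using this
  have hAN0 : ∀ᵐ ω ∂μ, ∀ k, 0 ≤ A k ω + N k ω := by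
    filter_upwards [hZ] with ω hω k
    exact nonneg_of_mul_nonneg_right ((add_nonneg (hXnn k ω) (hYnn k ω)).trans (hω k))
      (zero_lt_one.trans_le (hP1 k ω))
  have hWn : 0 ≤ᵐ[μ] W n := by
    filter_upwards [hAW n le_rfl, hAN0] with ω h1 h2
    exact (h2 n).trans h1
  set S : Ω → ℝ := fun ω => (range (n + 1)).sup' nonempty_range_add_one
    fun k => (W k ω)⁺ with hSdef
  have hS0 : ∀ ω, 0 ≤ S ω := fun ω =>
    (posPart_nonneg (W 0 ω)).trans (le_sup' (fun k => (W k ω)⁺) (by simp))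
  have hSm : Measurable S := Finset.measurable_range_sup'' fun k _ =>
    (((hWmart.stronglyMeasurable k).mono (ℱ.le k)).measurable).sup_const 0
  have hmoment : ∫⁻ ω, ENNReal.ofReal (S ω ^ p) ∂μ ≤ ENNReal.ofReal (1 / (1 - p) * a ^ p) :=
    lintegral_rpow_le_of_weak_type hSm hS0 ha0 hp0 hp1 fun c hc =>
      hWint ▸ weak_type_sup_pos hWmart n hWn c hc
  have hAW' : ∀ᵐ ω ∂μ, ∀ k, k ≤ n → A k ω + N k ω ≤ W k ω :=
    ae_all_iff.2 fun k => by
      by_cases hk : k ≤ n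
      · filter_upwards [hAW k hk] with ω hω _ using hω
      · exact .of_forall fun ω h => absurd h hk
  have hsup : ∀ᵐ ω ∂μ, (range (n + 1)).sup' nonempty_range_add_one
      (fun k => (X k ω + Y k ω) ^ q) ≤ S ω ^ q * P n ω ^ q := by
    filter_upwards [hZ, hAW', hAN0] with ω hω hW h0
    refine sup'_le _ _ fun k hk => ?_
    have hkn : k ≤ n := Nat.lt_succ_iff.1 (mem_range.1 hk)
    rw [← Real.mul_rpow (hS0 ω) (zero_le_one.trans (hP1 n ω))]
    refine Real.rpow_le_rpow (add_nonneg (hXnn k ω) (hYnn k ω)) ?_ hq0.le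
    have hPk : P k ω ≤ P n ω := by
      refine monotone_nat_of_le_succ (f := fun k => P k ω) (fun j => ?_) hkn
      simp only [hPdef, prod_range_succ]
      exact le_mul_of_one_le_right (zero_le_one.trans (hP1 j ω)) (by linarith [hGnn j ω])
    have hWS : W k ω ≤ S ω := (le_posPart _).trans (le_sup' (fun k => (W k ω)⁺) hk)
    rw [mul_comm (S ω)]
    exact (hω k).trans (mul_le_mul hPk ((hW k hkn).trans hWS) (h0 k)
      (zero_le_one.trans (hP1 n ω)))
  have hSqm : Measurable fun ω => S ω ^ q := hSm.pow_const q
  have hHolder : eLpNorm (fun ω => S ω ^ q * P n ω ^ q) 1 μ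
      ≤ eLpNorm (fun ω => S ω ^ q) α μ * eLpNorm (fun ω => P n ω ^ q) α' μ := by
    have : ENNReal.HolderTriple α α' 1 := ⟨by simpa [one_div] using hconj⟩
    have := eLpNorm_le_eLpNorm_mul_eLpNorm_of_nnnorm (r := 1) (p := α) (q := α') (μ := μ)
      hSqm.aestronglyMeasurable hPqm.aestronglyMeasurable (fun x y : ℝ => x * y) 1
      (.of_forall fun ω => by simp)
    simpa using this
  have hSnorm : eLpNorm (fun ω => S ω ^ q) α μ
      ≤ (1 + 1 / (1 - ENNReal.ofReal q * α)) ^ (1 / r) * ENNReal.ofReal a ^ q := by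
    rw [eLpNorm_eq_lintegral_rpow_enorm_toReal hα0 hαtop, ← hr]
    have hpt : ∀ ω, ‖S ω ^ q‖ₑ ^ r = ENNReal.ofReal (S ω ^ p) := fun ω => by
      have hSq : 0 ≤ S ω ^ q := Real.rpow_nonneg (hS0 ω) q
      rw [Real.enorm_of_nonneg hSq, ENNReal.ofReal_rpow_of_nonneg hSq hr0.le,
        ← Real.rpow_mul (hS0 ω)]
    simp only [hpt]
    calc _ ≤ (ENNReal.ofReal (1 / (1 - p) * a ^ p)) ^ (1 / r) := by gcongr
      _ = (ENNReal.ofReal (1 / (1 - p))) ^ (1 / r) * ENNReal.ofReal a ^ q := by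
        have h1p : 0 ≤ 1 / (1 - p) := by
          have : 0 < 1 - p := by linarith
          positivity
        rw [ENNReal.ofReal_mul h1p, ENNReal.mul_rpow_of_nonneg _ _ (by positivity),
          ← ENNReal.ofReal_rpow_of_nonneg ha0 hp0.le, ← ENNReal.rpow_mul]
        congr 2
        rw [hp]
        field_simp
      _ ≤ _ := by gcongr
  calc ∫⁻ ω, ENNReal.ofReal ((range (n + 1)).sup' nonempty_range_add_one
        (fun k => (X k ω + Y k ω) ^ q)) ∂μ
      ≤ ∫⁻ ω, ‖S ω ^ q * P n ω ^ q‖ₑ ∂μ := by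
        refine lintegral_mono_ae ?_
        filter_upwards [hsup] with ω hω
        exact (ENNReal.ofReal_le_ofReal hω).trans (Real.ofReal_le_enorm _)
    _ = eLpNorm (fun ω => S ω ^ q * P n ω ^ q) 1 μ := eLpNorm_one_eq_lintegral_enorm.symm
    _ ≤ _ := hHolder
    _ ≤ ((1 + 1 / (1 - ENNReal.ofReal q * α)) ^ (1 / r) * ENNReal.ofReal a ^ q)
        * eLpNorm (fun ω => P n ω ^ q) α' μ := by gcongr
    _ = _ := by ring
end

section
/- From polynomial moment rates to pathwise rates: Let (Ω, F, P) be a probability space, let m > 0, γ > 0, C ≥ 0, and let 0 < γ₁ < γ - 1/m (so in particular m(γ - γ₁) > 1). Suppose {Y_M}_{M≥1} is a sequence of nonnegative real random variables satisfying (E[Y_M^m])^{1/m} ≤ C · M^{-γ} for every integer M ≥ 1. Then the random variable K := sup_{M≥1} M^{γ₁} Y_M satisfies E[K^m] < ∞, and for every M ≥ 1 one has Y_M ≤ K · M^{-γ₁} almost surely. -/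
/-!
A supremum of nonnegative numbers is dominated by their sum: with
`S ω = ∑_{M ≥ 1} (M^{γ₁} Y_M ω)^m ∈ [0, ∞]` one has `K^m ≤ S`. By Tonelli and the moment bound,
`E[S] ≤ C^m ∑ M^{-m(γ - γ₁)}`, which converges because `m(γ - γ₁) > 1`. Hence `E[K^m] < ∞`, and
almost surely `S < ∞`, so that the real supremum defining `K` is bounded and dominates each of
its terms.
-/

open MeasureTheory
open scoped ENNReal

/-- If the sum of `m`-th powers is finite, its `m`-th root bounds every term. -/
lemma le_rpow_of_tsum_ne_top {ι : Type*} {m : ℝ} (hm : 0 < m) (a : ι → ℝ) (ha : ∀ i, 0 ≤ a i)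
    (hS : (∑' i, ENNReal.ofReal (a i ^ m)) ≠ ∞) (i : ι) :
    a i ≤ (∑' i, ENNReal.ofReal (a i ^ m)).toReal ^ (1 / m) := by
  have h : a i ^ m ≤ (∑' i, ENNReal.ofReal (a i ^ m)).toReal :=
    (ENNReal.ofReal_le_iff_le_toReal hS).1 (ENNReal.le_tsum i)
  rw [one_div]
  exact (Real.le_rpow_inv_iff_of_pos (ha i) ENNReal.toReal_nonneg hm).2 h

/-- The real `⨆` takes the junk value `0` on unbounded families, but there the right-hand side
is `∞`, so the bound needs no boundedness assumption. -/
lemma ofReal_iSup_rpow_le_tsum {ι : Type*} {m : ℝ} (hm : 0 < m) (a : ι → ℝ) (ha : ∀ i, 0 ≤ a i) :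
    ENNReal.ofReal ((⨆ i, a i) ^ m) ≤ ∑' i, ENNReal.ofReal (a i ^ m) := by
  by_cases hS : (∑' i, ENNReal.ofReal (a i ^ m)) = ∞
  · rw [hS]; exact le_top
  · rw [ENNReal.ofReal_le_iff_le_toReal hS,
      ← Real.le_rpow_inv_iff_of_pos (Real.iSup_nonneg ha) ENNReal.toReal_nonneg hm, ← one_div]
    exact Real.iSup_le (le_rpow_of_tsum_ne_top hm a ha hS)
      (Real.rpow_nonneg ENNReal.toReal_nonneg _)

/-- The `m`-th moment of `M^{γ₁} Y_M` decays like `M^{-m(γ - γ₁)}`. -/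
lemma lintegral_weighted_rpow_le {Ω : Type*} [MeasurableSpace Ω] (P : Measure Ω)
    {m γ C γ₁ : ℝ} (hm : 0 < m) (hC : 0 ≤ C) (X : Ω → ℝ) (hX : ∀ ω, 0 ≤ X ω)
    {M : ℕ} (hM : 1 ≤ M)
    (hmom : (∫⁻ ω, ENNReal.ofReal (X ω ^ m) ∂P) ^ (1 / m)
      ≤ ENNReal.ofReal (C * (M : ℝ) ^ (-γ))) :
    ∫⁻ ω, ENNReal.ofReal (((M : ℝ) ^ γ₁ * X ω) ^ m) ∂P
      ≤ ENNReal.ofReal (C ^ m * (M : ℝ) ^ (-(m * (γ - γ₁)))) := by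
  have hM0 : (0 : ℝ) < M := by exact_mod_cast hM
  have hw : 0 ≤ ((M : ℝ) ^ γ₁) ^ m := by positivity
  have h1 : ∀ ω, ENNReal.ofReal (((M : ℝ) ^ γ₁ * X ω) ^ m)
      = ENNReal.ofReal (((M : ℝ) ^ γ₁) ^ m) * ENNReal.ofReal (X ω ^ m) := fun ω => by
    rw [Real.mul_rpow (by positivity) (hX ω), ENNReal.ofReal_mul hw]
  have h2 : ∫⁻ ω, ENNReal.ofReal (X ω ^ m) ∂P
      ≤ ENNReal.ofReal ((C * (M : ℝ) ^ (-γ)) ^ m) := by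
    rw [← ENNReal.ofReal_rpow_of_nonneg (by positivity) hm.le]
    rw [one_div] at hmom
    exact (ENNReal.rpow_inv_le_iff hm).1 hmom
  simp_rw [h1]
  rw [lintegral_const_mul' _ _ ENNReal.ofReal_ne_top]
  refine (mul_le_mul_right h2 _).trans (le_of_eq ?_)
  rw [← ENNReal.ofReal_mul hw, Real.mul_rpow hC (by positivity), ← Real.rpow_mul hM0.le,
    ← Real.rpow_mul hM0.le, mul_left_comm, ← Real.rpow_add hM0]
  congr 3
  ring

/-- From polynomial moment rates to pathwise rates: if nonnegative random
variables `Y M` satisfy `(E[Y_M^m])^{1/m} ≤ C·M^{-γ}` for all `M ≥ 1`, and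
`0 < γ₁ < γ - 1/m`, then `K := sup_{M≥1} M^{γ₁} Y_M` satisfies `E[K^m] < ∞`
and `Y_M ≤ K·M^{-γ₁}` almost surely for every `M ≥ 1`. -/
theorem moment_rate_to_pathwise_rate
    {Ω : Type*} [MeasurableSpace Ω] (P : Measure Ω) [IsProbabilityMeasure P]
    (m γ C γ₁ : ℝ) (hm : 0 < m) (hγ : 0 < γ) (hC : 0 ≤ C)
    (hγ₁ : 0 < γ₁) (hγ₁' : γ₁ < γ - 1 / m)
    (Y : ℕ → Ω → ℝ) (hYmeas : ∀ M, Measurable (Y M))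
    (hYnn : ∀ M ω, 0 ≤ Y M ω)
    (hmom : ∀ M : ℕ, 1 ≤ M →
      (∫⁻ ω, ENNReal.ofReal (Y M ω ^ m) ∂P) ^ (1 / m)
        ≤ ENNReal.ofReal (C * (M : ℝ) ^ (-γ))) :
    (∫⁻ ω, ENNReal.ofReal
        ((⨆ M : {M : ℕ // 1 ≤ M}, ((M : ℕ) : ℝ) ^ γ₁ * Y M ω) ^ m) ∂P) < ∞ ∧
      ∀ M : ℕ, 1 ≤ M → ∀ᵐ ω ∂P,
        Y M ω ≤ (⨆ N : {N : ℕ // 1 ≤ N}, ((N : ℕ) : ℝ) ^ γ₁ * Y N ω)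
          * (M : ℝ) ^ (-γ₁) := by
  set a : {M : ℕ // 1 ≤ M} → Ω → ℝ := fun M ω => ((M : ℕ) : ℝ) ^ γ₁ * Y M ω with ha_def
  have ha : ∀ ω M, 0 ≤ a M ω := fun ω M => mul_nonneg (by positivity) (hYnn M ω)
  have hmeas : ∀ M, Measurable fun ω => ENNReal.ofReal (a M ω ^ m) := fun M =>
    (((hYmeas M).const_mul _).pow_const m).ennreal_ofReal
  have hexp : 1 < m * (γ - γ₁) := by
    have h : 1 / m < γ - γ₁ := by linarith
    rwa [div_lt_iff₀' hm] at h
  have hsum : Summable fun M : {M : ℕ // 1 ≤ M} =>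
      C ^ m * ((M : ℕ) : ℝ) ^ (-(m * (γ - γ₁))) :=
    ((Real.summable_nat_rpow.2 (by linarith)).mul_left (C ^ m)).subtype {M : ℕ | 1 ≤ M}
  have hfin : ∫⁻ ω, ∑' M, ENNReal.ofReal (a M ω ^ m) ∂P < ∞ := by
    rw [lintegral_tsum fun M => (hmeas M).aemeasurable]
    refine lt_of_le_of_lt (ENNReal.tsum_le_tsum fun M =>
      lintegral_weighted_rpow_le (γ₁ := γ₁) P hm hC (Y M) (hYnn M) M.2 (hmom M M.2)) ?_
    exact hsum.tsum_ofReal_lt_top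
  refine ⟨(lintegral_mono fun ω => ofReal_iSup_rpow_le_tsum hm (fun M => a M ω) (ha ω)).trans_lt
    hfin, fun M hM => ?_⟩
  filter_upwards [ae_lt_top (Measurable.ennreal_tsum hmeas) hfin.ne] with ω hω
  have hbdd : BddAbove (Set.range fun N => a N ω) :=
    ⟨_, Set.forall_mem_range.2 (le_rpow_of_tsum_ne_top hm (fun N => a N ω) (ha ω) hω.ne)⟩
  have hM0 : (0 : ℝ) < M := by exact_mod_cast hM
  have hle : (M : ℝ) ^ γ₁ * Y M ω ≤ ⨆ N, a N ω := le_ciSup hbdd ⟨M, hM⟩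
  rw [Real.rpow_neg hM0.le, ← div_eq_mul_inv, le_div_iff₀' (by positivity)]
  exact hle
end
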